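/- Fix an integer n ≥ 2, θ ∈ (0, π) and ε₁ > 0. There exists ε₃ ∈ (0, θ) depending only on ε₁, θ, n with the following property: for every n×n positive-definite Hermitian complex matrix χ₀, every n×n Hermitian matrix ω with ω ∈ Γ_{χ₀,θ}, and every Hermitian matrix χ with χ ≥ χ₀ (Loewner order), one has ω + ε₁χ ∈ Γ_{χ₀,θ−ε₃}. -/

import Mathlib

/-!
Conjugating by `χ₀^{-1/2}` turns `χ ≥ χ₀` into `χ₀^{-1/2} χ χ₀^{-1/2} ≥ 1`, so by Weyl's
monotonicity principle adding `ε₁ χ` raises every sorted eigenvalue with respect to `χ₀` by at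
least `ε₁`. Now let `n - 1` of the angles `arccot λᵢ` sum to less than `θ`. If each of them is below
`θ / (2n)`, their sum is below `θ / 2` and stays there, because `arccot` decreases. Otherwise one of
them lies in the compact interval `[θ / (2n), θ]` inside `(0, π)`; the corresponding `λᵢ` then
ranges over a compact interval of `ℝ`, so raising it by `ε₁` decreases that angle by an amount
bounded below in terms of `ε₁`, `θ` and `n` only.
-/

open Real Matrix
open scoped ComplexOrder Classical

/-- The arccotangent with range `(0, π)`. -/
noncomputable def arccot (x : ℝ) : ℝ := π / 2 - Real.arctan x

open scoped MatrixOrder in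
/-- The eigenvalues of `ω` with respect to a positive-definite Hermitian `χ`: the (real)
eigenvalues of the Hermitian matrix `χ^{-1/2} * ω * χ^{-1/2}`, where `χ^{1/2}` is the
positive-definite square root of `χ` (junk value `0` if the side conditions fail). -/
noncomputable def eigsWrt {n : ℕ} (χ ω : Matrix (Fin n) (Fin n) ℂ) : Fin n → ℝ :=
  if hχ : χ.PosDef then
    if hM : (((CFC.sqrt χ)⁻¹ : Matrix (Fin n) (Fin n) ℂ) * ω
        * ((CFC.sqrt χ)⁻¹ : Matrix (Fin n) (Fin n) ℂ)).IsHermitian then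
      hM.eigenvalues
    else 0
  else 0

/-- `ω ∈ Γ_{χ,θ}` : the sum of `arccot` of any `n − 1` eigenvalues of `ω` with respect to `χ`
is less than `θ`. -/
def memGamma {n : ℕ} (χ ω : Matrix (Fin n) (Fin n) ℂ) (θ : ℝ) : Prop :=
  ∀ I : Finset (Fin n), I.card = n - 1 → ∑ i ∈ I, arccot (eigsWrt χ ω i) < θ

/-- `A ≤ B` in the Loewner order: `B − A` is positive semidefinite. -/
def loewnerLE {n : ℕ} (A B : Matrix (Fin n) (Fin n) ℂ) : Prop := (B - A).PosSemidef

section Weyl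

open Module
open scoped InnerProductSpace

variable {𝕜 E : Type*} [RCLike 𝕜] [NormedAddCommGroup E] [InnerProductSpace 𝕜 E]
  [FiniteDimensional 𝕜 E] {n : ℕ} {T U : E →ₗ[𝕜] E}

lemma re_inner_map_self_eq_sum_eigenvalues_mul (hT : T.IsSymmetric) (hn : finrank 𝕜 E = n)
    (v : E) :
    RCLike.re ⟪v, T v⟫_𝕜 =
      ∑ i, hT.eigenvalues hn i * ‖⟪hT.eigenvectorBasis hn i, v⟫_𝕜‖ ^ 2 := by
  rw [← (hT.eigenvectorBasis hn).sum_inner_mul_inner, map_sum]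
  refine Finset.sum_congr rfl fun i _ ↦ ?_
  rw [← hT, hT.apply_eigenvectorBasis, inner_smul_left, RCLike.conj_ofReal, mul_left_comm,
    RCLike.re_ofReal_mul, inner_mul_symm_re_eq_norm, norm_mul, norm_inner_symm v, sq]

lemma re_inner_map_self_le_eigenvalues_mul_sq_norm (hT : T.IsSymmetric) (hn : finrank 𝕜 E = n)
    {k : Fin n} {v : E} (hv : ∀ i < k, ⟪hT.eigenvectorBasis hn i, v⟫_𝕜 = 0) :
    RCLike.re ⟪v, T v⟫_𝕜 ≤ hT.eigenvalues hn k * ‖v‖ ^ 2 := by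
  rw [re_inner_map_self_eq_sum_eigenvalues_mul hT hn,
    ← (hT.eigenvectorBasis hn).sum_sq_norm_inner_right v, Finset.mul_sum]
  refine Finset.sum_le_sum fun i _ ↦ ?_
  rcases lt_or_ge i k with hik | hki
  · simp [hv i hik]
  · gcongr
    exact hT.eigenvalues_antitone hn hki

lemma eigenvalues_mul_sq_norm_le_re_inner_map_self (hT : T.IsSymmetric) (hn : finrank 𝕜 E = n)
    {k : Fin n} {v : E} (hv : ∀ i, k < i → ⟪hT.eigenvectorBasis hn i, v⟫_𝕜 = 0) :
    hT.eigenvalues hn k * ‖v‖ ^ 2 ≤ RCLike.re ⟪v, T v⟫_𝕜 := by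
  rw [re_inner_map_self_eq_sum_eigenvalues_mul hT hn,
    ← (hT.eigenvectorBasis hn).sum_sq_norm_inner_right v, Finset.mul_sum]
  refine Finset.sum_le_sum fun i _ ↦ ?_
  rcases lt_or_ge k i with hki | hik
  · simp [hv i hki]
  · gcongr
    exact hT.eigenvalues_antitone hn hik

lemma exists_ne_zero_forall_inner_eq_zero {ι : Type*} [Fintype ι] (w : ι → E)
    (hι : Fintype.card ι < finrank 𝕜 E) : ∃ v : E, v ≠ 0 ∧ ∀ i, ⟪w i, v⟫_𝕜 = 0 := by
  have hker : LinearMap.ker (LinearMap.pi fun i ↦ innerₛₗ 𝕜 (w i)) ≠ ⊥ :=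
    LinearMap.ker_ne_bot_of_finrank_lt (by rwa [finrank_fintype_fun_eq_card])
  obtain ⟨v, hv, hv₀⟩ := Submodule.exists_mem_ne_zero_of_ne_bot hker
  exact ⟨v, hv₀, fun i ↦ congrFun (LinearMap.mem_ker.mp hv) i⟩

lemma isSymmetric_eigenvalues_add_le_of_add_smul_one_le (hT : T.IsSymmetric) (hU : U.IsSymmetric)
    (hn : finrank 𝕜 E = n) {c : ℝ} (hTU : T + (c : 𝕜) • 1 ≤ U) (k : Fin n) :
    hT.eigenvalues hn k + c ≤ hU.eigenvalues hn k := by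
  -- The spans of the eigenvectors of `T` of index `≤ k` and of those of `U` of index `≥ k` meet
  -- nontrivially: together they are cut out by only `n - 1` orthogonality conditions.
  obtain ⟨v, hv₀, hv⟩ := exists_ne_zero_forall_inner_eq_zero (𝕜 := 𝕜)
    (fun i : {i // i ≠ k} ↦
      if k < i then hT.eigenvectorBasis hn i else hU.eigenvectorBasis hn i)
    (by simpa [hn] using k.pos)
  have hvT : hT.eigenvalues hn k * ‖v‖ ^ 2 ≤ RCLike.re ⟪v, T v⟫_𝕜 :=
    eigenvalues_mul_sq_norm_le_re_inner_map_self hT hn fun i hki ↦ by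
      simpa [hki] using hv ⟨i, hki.ne'⟩
  have hvU : RCLike.re ⟪v, U v⟫_𝕜 ≤ hU.eigenvalues hn k * ‖v‖ ^ 2 :=
    re_inner_map_self_le_eigenvalues_mul_sq_norm hU hn fun i hik ↦ by
      simpa [hik.not_gt] using hv ⟨i, hik.ne⟩
  have hgap : RCLike.re ⟪v, T v⟫_𝕜 + c * ‖v‖ ^ 2 ≤ RCLike.re ⟪v, U v⟫_𝕜 := by
    simpa [inner_sub_right, inner_add_right, inner_smul_right] using
      LinearMap.IsPositive.re_inner_nonneg_right hTU v
  refine le_of_mul_le_mul_right ?_ (show 0 < ‖v‖ ^ 2 by positivity)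
  linarith

end Weyl

section Loewner

open scoped MatrixOrder

variable {𝕜 ι : Type*} [RCLike 𝕜] [Fintype ι] [DecidableEq ι] {A B : Matrix ι ι 𝕜}

lemma isHermitian_eigenvalues_add_le_of_add_smul_one_le (hA : A.IsHermitian) (hB : B.IsHermitian)
    {c : ℝ} (hAB : A + c • 1 ≤ B) (i : ι) : hA.eigenvalues i + c ≤ hB.eigenvalues i := by
  refine isSymmetric_eigenvalues_add_le_of_add_smul_one_le _ _ _ ?_ _
  have hpos := Matrix.isPositive_toEuclideanLin_iff.mpr (Matrix.le_iff.mp hAB)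
  rwa [map_sub, map_add, RCLike.real_smul_eq_coe_smul (K := 𝕜), map_smul, Matrix.toLpLin_one]
    at hpos

lemma inv_sqrt_mul_mul_inv_sqrt_eq_conjSqrt (hA : A.PosSemidef) (B : Matrix ι ι 𝕜) :
    (CFC.sqrt A)⁻¹ * B * (CFC.sqrt A)⁻¹ = CFC.conjSqrt A⁻¹ B := by
  rw [CFC.conjSqrt_apply, hA.inv_sqrt]

lemma conjSqrt_inv_self (hA : A.PosDef) : CFC.conjSqrt A⁻¹ A = 1 := by
  rw [Matrix.nonsing_inv_eq_ringInverse]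
  exact CFC.conjSqrt_ringInverse_self A (Matrix.isStrictlyPositive_iff_posDef.mpr hA)

lemma isHermitian_inv_sqrt_mul_mul_inv_sqrt (hB : B.IsHermitian) :
    ((CFC.sqrt A)⁻¹ * B * (CFC.sqrt A)⁻¹).IsHermitian :=
  IsSelfAdjoint.conjugate_self hB (CFC.sqrt_nonneg A).posSemidef.isHermitian.inv

variable {n : ℕ} {χ ω ω' : Matrix (Fin n) (Fin n) ℂ}

lemma eigsWrt_eq_eigenvalues (hχ : χ.PosDef) (hω : ω.IsHermitian) :
    eigsWrt χ ω = (isHermitian_inv_sqrt_mul_mul_inv_sqrt (A := χ) hω).eigenvalues := by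
  rw [eigsWrt, dif_pos hχ, dif_pos (isHermitian_inv_sqrt_mul_mul_inv_sqrt hω)]

lemma eigsWrt_add_le_of_add_smul_le (hχ : χ.PosDef) (hω : ω.IsHermitian) (hω' : ω'.IsHermitian)
    {c : ℝ} (h : ω + c • χ ≤ ω') (i : Fin n) : eigsWrt χ ω i + c ≤ eigsWrt χ ω' i := by
  rw [eigsWrt_eq_eigenvalues hχ hω, eigsWrt_eq_eigenvalues hχ hω']
  refine isHermitian_eigenvalues_add_le_of_add_smul_one_le _ _ ?_ i
  simp only [inv_sqrt_mul_mul_inv_sqrt_eq_conjSqrt hχ.posSemidef]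
  calc CFC.conjSqrt χ⁻¹ ω + c • 1 = CFC.conjSqrt χ⁻¹ (ω + c • χ) := by
        rw [map_add, map_smul, conjSqrt_inv_self hχ]
    _ ≤ CFC.conjSqrt χ⁻¹ ω' := CFC.conjSqrt_monotone h

end Loewner

section Arccot

open Set

lemma strictAnti_arccot : StrictAnti arccot := fun _ _ hxy ↦
  sub_lt_sub_left (arctan_strictMono hxy) _

lemma continuous_arccot : Continuous arccot :=
  continuous_const.sub continuous_arctan

lemma arccot_pos (x : ℝ) : 0 < arccot x :=
  sub_pos.mpr (arctan_lt_pi_div_two x)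

lemma arccot_tan_pi_div_two_sub {t : ℝ} (ht : t ∈ Ioo 0 π) : arccot (tan (π / 2 - t)) = t := by
  rw [arccot, arctan_tan (by linarith [ht.2]) (by linarith [ht.1]), sub_sub_cancel]

lemma preimage_arccot_Icc {a b : ℝ} (ha : a ∈ Ioo 0 π) (hb : b ∈ Ioo 0 π) :
    arccot ⁻¹' Icc a b = Icc (tan (π / 2 - b)) (tan (π / 2 - a)) := by
  ext x
  rw [mem_preimage, mem_Icc, mem_Icc, ← strictAnti_arccot.le_iff_ge (b := x),
    ← strictAnti_arccot.le_iff_ge (a := x), arccot_tan_pi_div_two_sub ha,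
    arccot_tan_pi_div_two_sub hb, and_comm]

lemma exists_pos_arccot_add_le_sub {a b ε : ℝ} (ha : a ∈ Ioo 0 π) (hb : b ∈ Ioo 0 π)
    (hε : 0 < ε) :
    ∃ δ > 0, ∀ x, arccot x ∈ Icc a b → arccot (x + ε) ≤ arccot x - δ := by
  have hcompact : IsCompact (arccot ⁻¹' Icc a b) := preimage_arccot_Icc ha hb ▸ isCompact_Icc
  have hcont : Continuous fun x ↦ arccot x - arccot (x + ε) :=
    continuous_arccot.sub (continuous_arccot.comp (continuous_add_const ε))
  obtain ⟨δ, hδ, hdrop⟩ := hcompact.exists_forall_le' hcont.continuousOn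
    fun x _ ↦ sub_pos.mpr (strictAnti_arccot (lt_add_of_pos_right x hε))
  exact ⟨δ, hδ, fun x hx ↦ le_sub_comm.mp (hdrop x hx)⟩

lemma sum_le_sum_sub_of_le_sub {ι G : Type*} [AddCommGroup G] [PartialOrder G]
    [IsOrderedAddMonoid G] {s : Finset ι} {f g : ι → G} {δ : G} {i : ι}
    (hfg : ∀ j ∈ s, f j ≤ g j) (hi : i ∈ s) (hδ : f i ≤ g i - δ) :
    ∑ j ∈ s, f j ≤ ∑ j ∈ s, g j - δ := by
  rw [← Finset.add_sum_erase s f hi, ← Finset.add_sum_erase s g hi, add_sub_right_comm]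
  exact add_le_add hδ (Finset.sum_le_sum fun j hj ↦ hfg j (Finset.mem_of_mem_erase hj))

lemma exists_sum_arccot_lt_sub {ι : Type*} {θ ε : ℝ} (hθ : θ ∈ Ioo 0 π) (hε : 0 < ε) (m : ℕ) :
    ∃ δ ∈ Ioo 0 θ, ∀ (s : Finset ι) (x y : ι → ℝ), s.card ≤ m → (∀ i ∈ s, x i + ε ≤ y i) →
      ∑ i ∈ s, arccot (x i) < θ → ∑ i ∈ s, arccot (y i) < θ - δ := by
  obtain ⟨hθ₀, hθπ⟩ := hθ
  have ha : θ / (2 * (m + 1)) ∈ Ioo 0 π :=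
    ⟨by positivity, (div_le_self hθ₀.le (by linarith [m.cast_nonneg (α := ℝ)])).trans_lt hθπ⟩
  obtain ⟨δ, hδ, hdrop⟩ := exists_pos_arccot_add_le_sub ha ⟨hθ₀, hθπ⟩ hε
  refine ⟨min δ (θ / 2), ⟨by positivity, (min_le_right _ _).trans_lt (by linarith)⟩,
    fun s x y hs hxy hsum ↦ ?_⟩
  have hanti : ∀ i ∈ s, arccot (y i) ≤ arccot (x i + ε) := fun i hi ↦
    strictAnti_arccot.antitone (hxy i hi)
  have hle : ∀ i ∈ s, arccot (y i) ≤ arccot (x i) := fun i hi ↦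
    (hanti i hi).trans (strictAnti_arccot.antitone (by linarith))
  by_cases hbig : ∃ i ∈ s, θ / (2 * (m + 1)) ≤ arccot (x i)
  · obtain ⟨i, hi, hai⟩ := hbig
    have hiθ : arccot (x i) ≤ θ :=
      (Finset.single_le_sum (fun j _ ↦ (arccot_pos (x j)).le) hi).trans hsum.le
    have hdrop_i : arccot (y i) ≤ arccot (x i) - δ :=
      (hanti i hi).trans (hdrop _ ⟨hai, hiθ⟩)
    calc ∑ j ∈ s, arccot (y j)
        ≤ ∑ j ∈ s, arccot (x j) - δ := sum_le_sum_sub_of_le_sub hle hi hdrop_i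
      _ < θ - min δ (θ / 2) := by linarith [min_le_left δ (θ / 2)]
  · push Not at hbig
    calc ∑ i ∈ s, arccot (y i)
        ≤ s.card • (θ / (2 * (m + 1))) :=
          Finset.sum_le_card_nsmul _ _ _ fun i hi ↦ (hle i hi).trans (hbig i hi).le
      _ < (m + 1 : ℝ) * (θ / (2 * (m + 1))) := by
          rw [nsmul_eq_mul]
          gcongr
          exact_mod_cast Nat.lt_succ_of_le hs
      _ = θ - θ / 2 := by field_simp; ring
      _ ≤ θ - min δ (θ / 2) := by gcongr; exact min_le_right _ _

end Arccot

/-- Fix `n ≥ 2`, `θ ∈ (0, π)` and `ε₁ > 0`. There exists `ε₃ ∈ (0, θ)`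
(depending only on `ε₁, θ, n`) such that for every positive-definite Hermitian `χ₀`,
every Hermitian `ω ∈ Γ_{χ₀,θ}` and every Hermitian `χ` with `χ ≥ χ₀` (Loewner order),
one has `ω + ε₁χ ∈ Γ_{χ₀,θ−ε₃}`. -/
theorem perturb_cone_angle (n : ℕ) (hn : 2 ≤ n) (θ : ℝ) (hθ : θ ∈ Set.Ioo 0 π)
    (ε₁ : ℝ) (hε₁ : 0 < ε₁) :
    ∃ ε₃ ∈ Set.Ioo (0 : ℝ) θ, ∀ χ₀ ω χ : Matrix (Fin n) (Fin n) ℂ,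
      χ₀.PosDef → ω.IsHermitian → χ.IsHermitian →
      loewnerLE χ₀ χ →
      memGamma χ₀ ω θ →
      memGamma χ₀ (ω + (ε₁ : ℝ) • χ) (θ - ε₃) := by
  obtain ⟨ε₃, hε₃, hdrop⟩ := exists_sum_arccot_lt_sub (ι := Fin n) hθ hε₁ (n - 1)
  refine ⟨ε₃, hε₃, fun χ₀ ω χ hχ₀ hω hχ hle hmem I hI ↦ ?_⟩
  have hω' : (ω + ε₁ • χ).IsHermitian := hω.add (hχ.smul (IsSelfAdjoint.all ε₁))
  have hshift : loewnerLE (ω + ε₁ • χ₀) (ω + ε₁ • χ) := by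
    rw [loewnerLE, add_sub_add_left_eq_sub, ← smul_sub]
    exact Matrix.PosSemidef.smul hle hε₁.le
  exact hdrop I _ _ hI.le (fun i _ ↦ eigsWrt_add_le_of_add_smul_le hχ₀ hω hω' hshift i) (hmem I hI)
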